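/- Assume σ ∈ (0, σ₀) and let S_ob := {ξ ∈ ℝ² : v₁∞ξ₁ + v₃∞ = v₂σξ₂ + v₃σ}. Then: (i) C∞ ∩ Cσ = C∞ ∩ S_ob, and this set consists of exactly one point P₁; at P₁ the line S_ob is tangent to C∞, and the gradients at P₁ of the defining functions (v₁∞ξ₁+v₃∞)² − B∞(1+|ξ|²) and (v₂σξ₂+v₃σ)² − B∞(1+|ξ|²) are nonzero and parallel (so C∞ and Cσ are tangent at P₁); (ii) every point (0,t) ∈ Cσ with t > 0 satisfies t < √(c∞² − v₁∞²)/√B∞, i.e. the intersection of Cσ with the positive ξ₂-axis lies strictly below the point P₀ := (0, √(c∞² − v₁∞²)/√B∞) where C∞ meets the positive ξ₂-axis. -/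

import Mathlib

open Real Set

/-!
Lift `ξ` to `X = (ξ₁, ξ₂, 1)`. If `N` is the unit normal of the plane of the oblique shock, the
velocities on its two sides are `V = T + c N` and `W = T + b N` with a common tangential part
`T ⟂ N`, and both sonic circles are sections of cones `⟪T + a N, X⟫² = ‖T‖² ‖X‖²`.
Subtracting the equations for `a = c` and `a = b` leaves `⟪N, X⟫ = 0` or
`⟪T, X⟫ = -(b + c) / 2 * ⟪N, X⟫`; Bessel's inequality rules out the second unless `⟪N, X⟫ = 0`.
On the shock plane either equation is the equality case of Cauchy–Schwarz for `T` and `X`, so the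
cones meet exactly in the line `ℝ T`, and along it both gradients are multiples of `N`.
The plane itself is found from the component of `V` normal to the edge of the wing: its
inclination is the Mach angle of that component minus its angle of attack.
-/

open scoped InnerProductSpace

section SonicCone

variable {E : Type*} [NormedAddCommGroup E] [InnerProductSpace ℝ E]

/-- The cone of rays `ℝ X` along which `V` has component of size `√B`; its section by the plane
of conical coordinates is the sonic circle of a flow with velocity `V`. -/
def sonicCone (V : E) (B : ℝ) : Set E := {X | ⟪V, X⟫_ℝ ^ 2 = B * ‖X‖ ^ 2}

/-- The gradient at `X` of the function `⟪V, ·⟫² - B ‖·‖²` defining `sonicCone V B`. -/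
def sonicGradient (V : E) (B : ℝ) (X : E) : E := (2 * ⟪V, X⟫_ℝ) • V - (2 * B) • X

lemma mem_sonicCone {V X : E} {B : ℝ} :
    X ∈ sonicCone V B ↔ ⟪V, X⟫_ℝ ^ 2 = B * ‖X‖ ^ 2 := Iff.rfl

variable {T N X : E} {a b : ℝ}

lemma inner_sq_add_norm_sq_mul_inner_sq_le (hTN : ⟪T, N⟫_ℝ = 0) (hN : ‖N‖ = 1) (X : E) :
    ⟪T, X⟫_ℝ ^ 2 + ‖T‖ ^ 2 * ⟪N, X⟫_ℝ ^ 2 ≤ ‖T‖ ^ 2 * ‖X‖ ^ 2 := by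
  have inner_proj : ⟪T, X - ⟪N, X⟫_ℝ • N⟫_ℝ = ⟪T, X⟫_ℝ := by
    rw [inner_sub_right, inner_smul_right, hTN, mul_zero, sub_zero]
  have norm_proj : ‖X - ⟪N, X⟫_ℝ • N‖ ^ 2 = ‖X‖ ^ 2 - ⟪N, X⟫_ℝ ^ 2 := by
    rw [norm_sub_sq_real, inner_smul_right, real_inner_comm, norm_smul, hN, mul_one,
      Real.norm_eq_abs, sq_abs]
    ring
  have cauchy_schwarz := sq_le_sq' (neg_le_of_abs_le (abs_real_inner_le_norm T _))
    (real_inner_le_norm T (X - ⟪N, X⟫_ℝ • N))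
  rw [inner_proj, mul_pow, norm_proj] at cauchy_schwarz
  linarith

lemma mem_span_singleton_iff_inner_sq_eq (hT : T ≠ 0) :
    X ∈ Submodule.span ℝ {T} ↔ ⟪T, X⟫_ℝ ^ 2 = ‖T‖ ^ 2 * ‖X‖ ^ 2 := by
  have cauchy_schwarz_eq := (norm_inner_eq_norm_tfae ℝ T X).out 0 3
  rw [or_iff_right hT] at cauchy_schwarz_eq
  rw [← cauchy_schwarz_eq, ← mul_pow, ← sq_eq_sq₀ (norm_nonneg _) (by positivity),
    Real.norm_eq_abs, sq_abs]

lemma inner_add_smul (T N X : E) (a : ℝ) :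
    ⟪T + a • N, X⟫_ℝ = ⟪T, X⟫_ℝ + a * ⟪N, X⟫_ℝ := by
  rw [inner_add_left, real_inner_smul_left]

lemma inner_normal_eq_zero_of_mem_span (hTN : ⟪T, N⟫_ℝ = 0) (hX : X ∈ Submodule.span ℝ {T}) :
    ⟪N, X⟫_ℝ = 0 := by
  obtain ⟨r, rfl⟩ := Submodule.mem_span_singleton.mp hX
  rw [inner_smul_right, real_inner_comm, hTN, mul_zero]

lemma mem_sonicCone_iff_mem_span (hT : T ≠ 0) (hX : ⟪N, X⟫_ℝ = 0) :
    X ∈ sonicCone (T + a • N) (‖T‖ ^ 2) ↔ X ∈ Submodule.span ℝ {T} := by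
  rw [mem_span_singleton_iff_inner_sq_eq hT, mem_sonicCone, inner_add_smul, hX,
    mul_zero, add_zero]

lemma sonicCone_inter_plane (hTN : ⟪T, N⟫_ℝ = 0) (hT : T ≠ 0) :
    sonicCone (T + a • N) (‖T‖ ^ 2) ∩ {X | ⟪N, X⟫_ℝ = 0} = Submodule.span ℝ {T} := by
  ext X
  constructor
  · rintro ⟨hcone, hplane⟩
    exact (mem_sonicCone_iff_mem_span hT hplane).mp hcone
  · intro hX
    have hplane := inner_normal_eq_zero_of_mem_span hTN hX
    exact ⟨(mem_sonicCone_iff_mem_span hT hplane).mpr hX, hplane⟩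

lemma inner_normal_eq_zero_of_mem_sonicCone (hTN : ⟪T, N⟫_ℝ = 0) (hN : ‖N‖ = 1) (hT : T ≠ 0)
    (hab : a ≠ b) (hab₀ : 0 ≤ a * b) (ha : X ∈ sonicCone (T + a • N) (‖T‖ ^ 2))
    (hb : X ∈ sonicCone (T + b • N) (‖T‖ ^ 2)) : ⟪N, X⟫_ℝ = 0 := by
  by_contra hX
  have bessel := inner_sq_add_norm_sq_mul_inner_sq_le hTN hN X
  rw [mem_sonicCone, inner_add_smul] at ha hb
  have inner_tangent : ⟪T, X⟫_ℝ = -((a + b) / 2 * ⟪N, X⟫_ℝ) := by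
    refine mul_left_cancel₀ (mul_ne_zero (sub_ne_zero.mpr hab) hX) ?_
    linear_combination (ha - hb) / 2
  have hpos : 0 < (a * b + ‖T‖ ^ 2) * ⟪N, X⟫_ℝ ^ 2 := by positivity
  rw [← ha, inner_tangent] at bessel
  linarith

lemma sonicCone_inter_sonicCone (hTN : ⟪T, N⟫_ℝ = 0) (hN : ‖N‖ = 1) (hT : T ≠ 0)
    (hab : a ≠ b) (hab₀ : 0 ≤ a * b) :
    sonicCone (T + a • N) (‖T‖ ^ 2) ∩ sonicCone (T + b • N) (‖T‖ ^ 2) =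
      Submodule.span ℝ {T} := by
  refine Subset.antisymm (fun X ⟨ha, hb⟩ ↦ ?_) fun X hX ↦ ?_
  · exact (mem_sonicCone_iff_mem_span hT
      (inner_normal_eq_zero_of_mem_sonicCone hTN hN hT hab hab₀ ha hb)).mp ha
  · have hplane := inner_normal_eq_zero_of_mem_span hTN hX
    exact ⟨(mem_sonicCone_iff_mem_span hT hplane).mpr hX,
      (mem_sonicCone_iff_mem_span hT hplane).mpr hX⟩

lemma inner_normal_pos_of_mem_sonicCone (hTN : ⟪T, N⟫_ℝ = 0) (hN : ‖N‖ = 1) (hT : T ≠ 0)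
    (ha : 0 ≤ a) (hX : X ∈ sonicCone (T + a • N) (‖T‖ ^ 2)) (hpos : 0 < ⟪T + a • N, X⟫_ℝ)
    (hspan : X ∉ Submodule.span ℝ {T}) : 0 < ⟪N, X⟫_ℝ := by
  have hne : ⟪N, X⟫_ℝ ≠ 0 := fun h ↦ hspan ((mem_sonicCone_iff_mem_span hT h).mp hX)
  by_contra! hle
  have bessel := inner_sq_add_norm_sq_mul_inner_sq_le hTN hN X
  have inner_le : ⟪T + a • N, X⟫_ℝ ≤ ⟪T, X⟫_ℝ := by
    rw [inner_add_smul]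
    linarith [mul_nonpos_of_nonneg_of_nonpos ha hle]
  have inner_sq_le : ⟪T + a • N, X⟫_ℝ ^ 2 ≤ ⟪T, X⟫_ℝ ^ 2 := by gcongr
  have hsq : 0 < ‖T‖ ^ 2 * ⟪N, X⟫_ℝ ^ 2 := by positivity
  rw [mem_sonicCone] at hX
  linarith

lemma sonicGradient_of_mem_span (hTN : ⟪T, N⟫_ℝ = 0) (hX : X ∈ Submodule.span ℝ {T}) :
    sonicGradient (T + a • N) (‖T‖ ^ 2) X = (2 * a * ⟪T, X⟫_ℝ) • N := by
  obtain ⟨r, rfl⟩ := Submodule.mem_span_singleton.mp hX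
  rw [sonicGradient, inner_add_smul, inner_normal_eq_zero_of_mem_span hTN hX, inner_smul_right,
    real_inner_self_eq_norm_sq]
  module

end SonicCone

section ConicalCoordinates

/-- The point of the plane `x₃ = 1` of ℝ³ with conical coordinates `ξ`. -/
noncomputable def conicalVector (ξ : ℝ × ℝ) : EuclideanSpace ℝ (Fin 3) := !₂[ξ.1, ξ.2, 1]

lemma inner_conicalVector (V : EuclideanSpace ℝ (Fin 3)) (ξ : ℝ × ℝ) :
    ⟪V, conicalVector ξ⟫_ℝ = V 0 * ξ.1 + V 1 * ξ.2 + V 2 := by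
  simp [conicalVector, PiLp.inner_apply, Fin.sum_univ_three, mul_comm]

lemma norm_conicalVector_sq (ξ : ℝ × ℝ) : ‖conicalVector ξ‖ ^ 2 = 1 + ξ.1 ^ 2 + ξ.2 ^ 2 := by
  simp only [conicalVector, EuclideanSpace.real_norm_sq_eq, Fin.sum_univ_three, Matrix.cons_val]
  ring

lemma conicalVector_mem_span_iff {T : EuclideanSpace ℝ (Fin 3)} (hT : T 2 ≠ 0) (ξ : ℝ × ℝ) :
    conicalVector ξ ∈ Submodule.span ℝ {T} ↔ ξ = (T 0 / T 2, T 1 / T 2) := by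
  rw [Submodule.mem_span_singleton]
  constructor
  · rintro ⟨r, hr⟩
    have h₀ : r * T 0 = ξ.1 := congr($hr 0)
    have h₁ : r * T 1 = ξ.2 := congr($hr 1)
    have h₂ : r * T 2 = 1 := congr($hr 2)
    rw [Prod.ext_iff, eq_div_iff hT, eq_div_iff hT, ← h₀, ← h₁]
    constructor <;> linear_combination T _ * h₂
  · rintro rfl
    refine ⟨(T 2)⁻¹, ?_⟩
    ext i
    fin_cases i <;> simp [conicalVector, hT] <;> field_simp

lemma conicalVector_ne_zero (ξ : ℝ × ℝ) : conicalVector ξ ≠ 0 :=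
  fun h ↦ one_ne_zero (congr($h 2) : (1 : ℝ) = 0)

lemma sonicGradient_conicalVector (V : EuclideanSpace ℝ (Fin 3)) (B : ℝ) (ξ : ℝ × ℝ) :
    sonicGradient V B (conicalVector ξ) =
      !₂[2 * ⟪V, conicalVector ξ⟫_ℝ * V 0 - 2 * B * ξ.1,
        2 * ⟪V, conicalVector ξ⟫_ℝ * V 1 - 2 * B * ξ.2,
        2 * ⟪V, conicalVector ξ⟫_ℝ * V 2 - 2 * B] := by
  ext i
  fin_cases i <;> simp [sonicGradient, conicalVector]

end ConicalCoordinates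

/-- A plane shock with unit normal `normal` separating flows with velocities `(v₁, 0, v₃)` and
`(0, w₂, w₃)` in ℝ³. The two velocities have the same component `tangent` along the shock, and
`c` and `downSpeed` are their components along `normal`; in a Chaplygin gas these are the sound
speeds on the two sides. The last four fields fix the orientation of the wing. -/
structure ConicalShock (v₁ v₃ w₂ w₃ c : ℝ) where
  tangent : EuclideanSpace ℝ (Fin 3)
  normal : EuclideanSpace ℝ (Fin 3)
  downSpeed : ℝ
  inner_tangent_normal : ⟪tangent, normal⟫_ℝ = 0
  norm_normal : ‖normal‖ = 1
  upstream : tangent + c • normal = !₂[v₁, 0, v₃]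
  downstream : tangent + downSpeed • normal = !₂[0, w₂, w₃]
  downSpeed_pos : 0 < downSpeed
  downSpeed_lt : downSpeed < c
  v₁_pos : 0 < v₁
  w₂_pos : 0 < w₂
  w₃_pos : 0 < w₃
  tangent_two_pos : 0 < tangent 2

namespace ConicalShock

variable {v₁ v₃ w₂ w₃ c : ℝ} (S : ConicalShock v₁ v₃ w₂ w₃ c)

lemma tangent_ne_zero : S.tangent ≠ 0 := by
  intro h
  simpa [h] using S.tangent_two_pos

lemma v₁_eq : v₁ = (c - S.downSpeed) * S.normal 0 := by
  have hV : S.tangent 0 + c * S.normal 0 = v₁ := congr($S.upstream 0)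
  have hW : S.tangent 0 + S.downSpeed * S.normal 0 = 0 := congr($S.downstream 0)
  linarith

lemma w₂_eq : w₂ = -(c - S.downSpeed) * S.normal 1 := by
  have hV : S.tangent 1 + c * S.normal 1 = 0 := congr($S.upstream 1)
  have hW : S.tangent 1 + S.downSpeed * S.normal 1 = w₂ := congr($S.downstream 1)
  linarith

lemma normal_zero_pos : 0 < S.normal 0 :=
  pos_of_mul_pos_right (S.v₁_eq ▸ S.v₁_pos) (sub_pos.mpr S.downSpeed_lt).le

lemma tangent_zero_ne_zero : S.tangent 0 ≠ 0 := by
  have hW : S.tangent 0 + S.downSpeed * S.normal 0 = 0 := congr($S.downstream 0)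
  linarith [mul_pos S.downSpeed_pos S.normal_zero_pos]

lemma norm_tangent_sq : ‖S.tangent‖ ^ 2 = v₁ ^ 2 + v₃ ^ 2 - c ^ 2 := by
  have pythagoras : ‖S.tangent + c • S.normal‖ ^ 2 = ‖S.tangent‖ ^ 2 + c ^ 2 := by
    rw [norm_add_sq_real, inner_smul_right, S.inner_tangent_normal, norm_smul, S.norm_normal,
      mul_one, Real.norm_eq_abs, sq_abs]
    ring
  have norm_upstream : ‖S.tangent + c • S.normal‖ ^ 2 = v₁ ^ 2 + v₃ ^ 2 := by
    rw [S.upstream]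
    simp [EuclideanSpace.real_norm_sq_eq, Fin.sum_univ_three]
  linarith

lemma inner_upstream (ξ : ℝ × ℝ) :
    ⟪S.tangent + c • S.normal, conicalVector ξ⟫_ℝ = v₁ * ξ.1 + v₃ := by
  rw [S.upstream, inner_conicalVector]
  simp

lemma inner_downstream (ξ : ℝ × ℝ) :
    ⟪S.tangent + S.downSpeed • S.normal, conicalVector ξ⟫_ℝ = w₂ * ξ.2 + w₃ := by
  rw [S.downstream, inner_conicalVector]
  simp

lemma upstreamCircle_eq :
    {ξ : ℝ × ℝ | (v₁ * ξ.1 + v₃) ^ 2 = ‖S.tangent‖ ^ 2 * (1 + ξ.1 ^ 2 + ξ.2 ^ 2)} =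
      conicalVector ⁻¹' sonicCone (S.tangent + c • S.normal) (‖S.tangent‖ ^ 2) := by
  ext ξ
  rw [mem_preimage, mem_sonicCone, S.inner_upstream, norm_conicalVector_sq, mem_ofPred_eq]

lemma downstreamCircle_eq :
    {ξ : ℝ × ℝ | (w₂ * ξ.2 + w₃) ^ 2 = ‖S.tangent‖ ^ 2 * (1 + ξ.1 ^ 2 + ξ.2 ^ 2)} =
      conicalVector ⁻¹' sonicCone (S.tangent + S.downSpeed • S.normal) (‖S.tangent‖ ^ 2) := by
  ext ξ
  rw [mem_preimage, mem_sonicCone, S.inner_downstream, norm_conicalVector_sq, mem_ofPred_eq]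

lemma shockLine_eq :
    {ξ : ℝ × ℝ | v₁ * ξ.1 + v₃ = w₂ * ξ.2 + w₃} =
      conicalVector ⁻¹' {X | ⟪S.normal, X⟫_ℝ = 0} := by
  ext ξ
  rw [mem_preimage, mem_ofPred_eq, mem_ofPred_eq, ← S.inner_upstream, ← S.inner_downstream,
    inner_add_smul, inner_add_smul, add_right_inj, mul_eq_mul_right_iff,
    or_iff_right S.downSpeed_lt.ne']

lemma circles_inter_eq :
    {ξ : ℝ × ℝ | (v₁ * ξ.1 + v₃) ^ 2 = ‖S.tangent‖ ^ 2 * (1 + ξ.1 ^ 2 + ξ.2 ^ 2)} ∩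
        {ξ : ℝ × ℝ | (w₂ * ξ.2 + w₃) ^ 2 = ‖S.tangent‖ ^ 2 * (1 + ξ.1 ^ 2 + ξ.2 ^ 2)} =
      conicalVector ⁻¹' Submodule.span ℝ {S.tangent} := by
  have hc : 0 < c := S.downSpeed_pos.trans S.downSpeed_lt
  rw [S.upstreamCircle_eq, S.downstreamCircle_eq, ← preimage_inter,
    sonicCone_inter_sonicCone S.inner_tangent_normal S.norm_normal S.tangent_ne_zero
      S.downSpeed_lt.ne' (mul_nonneg hc.le S.downSpeed_pos.le)]

lemma upstreamCircle_inter_shockLine_eq :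
    {ξ : ℝ × ℝ | (v₁ * ξ.1 + v₃) ^ 2 = ‖S.tangent‖ ^ 2 * (1 + ξ.1 ^ 2 + ξ.2 ^ 2)} ∩
        {ξ : ℝ × ℝ | v₁ * ξ.1 + v₃ = w₂ * ξ.2 + w₃} =
      conicalVector ⁻¹' Submodule.span ℝ {S.tangent} := by
  rw [S.upstreamCircle_eq, S.shockLine_eq, ← preimage_inter,
    sonicCone_inter_plane S.inner_tangent_normal S.tangent_ne_zero]

lemma existsUnique_conicalVector_mem_span :
    ∃! P : ℝ × ℝ, P ∈ conicalVector ⁻¹' Submodule.span ℝ {S.tangent} := by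
  simp only [mem_preimage, SetLike.mem_coe, conicalVector_mem_span_iff S.tangent_two_pos.ne',
    existsUnique_eq]

lemma upstreamGradient_eq {ξ : ℝ × ℝ}
    (hξ : conicalVector ξ ∈ Submodule.span ℝ {S.tangent}) :
    2 * v₁ * (v₁ * ξ.1 + v₃) - 2 * ‖S.tangent‖ ^ 2 * ξ.1 =
        2 * c * ⟪S.tangent, conicalVector ξ⟫_ℝ * S.normal 0 ∧
      -(2 * ‖S.tangent‖ ^ 2 * ξ.2) =
        2 * c * ⟪S.tangent, conicalVector ξ⟫_ℝ * S.normal 1 := by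
  have h := sonicGradient_of_mem_span (a := c) S.inner_tangent_normal hξ
  rw [sonicGradient_conicalVector, S.inner_upstream, S.upstream] at h
  have h₀ : 2 * (v₁ * ξ.1 + v₃) * v₁ - 2 * ‖S.tangent‖ ^ 2 * ξ.1 = _ := congr($h 0)
  have h₁ : 2 * (v₁ * ξ.1 + v₃) * 0 - 2 * ‖S.tangent‖ ^ 2 * ξ.2 = _ := congr($h 1)
  rw [PiLp.smul_apply, smul_eq_mul] at h₀ h₁
  constructor <;> linarith

lemma downstreamGradient_eq {ξ : ℝ × ℝ}
    (hξ : conicalVector ξ ∈ Submodule.span ℝ {S.tangent}) :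
    -(2 * ‖S.tangent‖ ^ 2 * ξ.1) =
        2 * S.downSpeed * ⟪S.tangent, conicalVector ξ⟫_ℝ * S.normal 0 ∧
      2 * w₂ * (w₂ * ξ.2 + w₃) - 2 * ‖S.tangent‖ ^ 2 * ξ.2 =
        2 * S.downSpeed * ⟪S.tangent, conicalVector ξ⟫_ℝ * S.normal 1 := by
  have h := sonicGradient_of_mem_span (a := S.downSpeed) S.inner_tangent_normal hξ
  rw [sonicGradient_conicalVector, S.inner_downstream, S.downstream] at h
  have h₀ : 2 * (w₂ * ξ.2 + w₃) * 0 - 2 * ‖S.tangent‖ ^ 2 * ξ.1 = _ := congr($h 0)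
  have h₁ : 2 * (w₂ * ξ.2 + w₃) * w₂ - 2 * ‖S.tangent‖ ^ 2 * ξ.2 = _ := congr($h 1)
  rw [PiLp.smul_apply, smul_eq_mul] at h₀ h₁
  constructor <;> linarith

lemma tangent_of_conicalVector_mem_span {P : ℝ × ℝ}
    (hP : conicalVector P ∈ Submodule.span ℝ {S.tangent}) :
    (2 * v₁ * (v₁ * P.1 + v₃) - 2 * ‖S.tangent‖ ^ 2 * P.1, -(2 * ‖S.tangent‖ ^ 2 * P.2)) ≠
        ((0 : ℝ), (0 : ℝ)) ∧
      (-(2 * ‖S.tangent‖ ^ 2 * P.1), 2 * w₂ * (w₂ * P.2 + w₃) - 2 * ‖S.tangent‖ ^ 2 * P.2) ≠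
        ((0 : ℝ), (0 : ℝ)) ∧
      v₁ * (-(2 * ‖S.tangent‖ ^ 2 * P.2)) =
        -w₂ * (2 * v₁ * (v₁ * P.1 + v₃) - 2 * ‖S.tangent‖ ^ 2 * P.1) ∧
      (2 * v₁ * (v₁ * P.1 + v₃) - 2 * ‖S.tangent‖ ^ 2 * P.1) *
          (2 * w₂ * (w₂ * P.2 + w₃) - 2 * ‖S.tangent‖ ^ 2 * P.2) =
        -(2 * ‖S.tangent‖ ^ 2 * P.2) * -(2 * ‖S.tangent‖ ^ 2 * P.1) := by
  obtain ⟨hV₀, hV₁⟩ := S.upstreamGradient_eq hP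
  obtain ⟨hW₀, hW₁⟩ := S.downstreamGradient_eq hP
  have hb := S.downSpeed_pos.ne'
  have hc := (S.downSpeed_pos.trans S.downSpeed_lt).ne'
  have hN := S.normal_zero_pos.ne'
  have hTP : ⟪S.tangent, conicalVector P⟫_ℝ ≠ 0 := by
    rw [← sq_pos_iff, (mem_span_singleton_iff_inner_sq_eq S.tangent_ne_zero).mp hP]
    have hT := S.tangent_ne_zero
    have hX := conicalVector_ne_zero P
    positivity
  rw [hV₀, hV₁, hW₀, hW₁]
  refine ⟨?_, ?_, ?_, by ring⟩
  · simp [hc, hTP, hN]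
  · simp [hb, hTP, hN]
  · linear_combination 2 * c * ⟪S.tangent, conicalVector P⟫_ℝ *
      (S.normal 1 * S.v₁_eq + S.normal 0 * S.w₂_eq)

lemma lt_of_mem_downstreamCircle {t : ℝ} (ht : 0 < t)
    (hmem : ((0, t) : ℝ × ℝ) ∈
      {ξ : ℝ × ℝ | (w₂ * ξ.2 + w₃) ^ 2 = ‖S.tangent‖ ^ 2 * (1 + ξ.1 ^ 2 + ξ.2 ^ 2)}) :
    t < √(c ^ 2 - v₁ ^ 2) / √(‖S.tangent‖ ^ 2) := by
  have hspan : conicalVector (0, t) ∉ Submodule.span ℝ {S.tangent} := by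
    rw [conicalVector_mem_span_iff S.tangent_two_pos.ne', Prod.mk.injEq]
    exact fun h ↦ div_ne_zero S.tangent_zero_ne_zero S.tangent_two_pos.ne' h.1.symm
  have hpos : 0 < w₂ * t + w₃ := add_pos (mul_pos S.w₂_pos ht) S.w₃_pos
  have hnormal : 0 < ⟪S.normal, conicalVector (0, t)⟫_ℝ := by
    rw [S.downstreamCircle_eq] at hmem
    refine inner_normal_pos_of_mem_sonicCone S.inner_tangent_normal S.norm_normal
      S.tangent_ne_zero S.downSpeed_pos.le hmem ?_ hspan
    rwa [S.inner_downstream]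
  have hlt : w₂ * t + w₃ < v₃ := by
    have hV := S.inner_upstream (0, t)
    have hW := S.inner_downstream (0, t)
    rw [inner_add_smul] at hV hW
    linarith [mul_lt_mul_of_pos_right S.downSpeed_lt hnormal]
  have hsq : (w₂ * t + w₃) ^ 2 < v₃ ^ 2 := by gcongr
  have hT : 0 < ‖S.tangent‖ ^ 2 := pow_pos (norm_pos_iff.mpr S.tangent_ne_zero) 2
  rw [← Real.sqrt_div' _ hT.le]
  refine Real.lt_sqrt_of_sq_lt ((lt_div_iff₀ hT).mpr ?_)
  rw [mem_ofPred_eq] at hmem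
  linarith [S.norm_tangent_sq]

end ConicalShock

section ShockPolar

variable {c u v : ℝ}

lemma mul_cos_add_mul_tan_mul_sin (R : ℝ) {β : ℝ} (hβ : cos β ≠ 0) :
    R * cos β + R * tan β * sin β = R / cos β := by
  rw [tan_eq_sin_div_cos]
  field_simp
  rw [cos_sq_add_sin_sq, mul_one]

lemma sqrt_mul_cos_arctan_div (hu : 0 < u) (v : ℝ) :
    √(v ^ 2 + u ^ 2) * cos (arctan (v / u)) = u := by
  have hsqrt : √(1 + (v / u) ^ 2) = √(v ^ 2 + u ^ 2) / u := by
    rw [← Real.sqrt_sq hu.le, ← Real.sqrt_div' _ (by positivity), Real.sqrt_sq hu.le]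
    congr 1
    field_simp
    ring
  rw [cos_arctan, hsqrt]
  field_simp

lemma sqrt_mul_sin_arctan_div (hu : 0 < u) (v : ℝ) :
    √(v ^ 2 + u ^ 2) * sin (arctan (v / u)) = v := by
  rw [← tan_mul_cos (cos_arctan_pos _).ne', tan_arctan, mul_left_comm,
    sqrt_mul_cos_arctan_div hu, div_mul_cancel₀ _ hu.ne']

lemma mul_cos_arcsin_div {q : ℝ} (hq : 0 < q) (c : ℝ) :
    q * cos (arcsin (c / q)) = √(q ^ 2 - c ^ 2) := by
  nth_rw 1 [← Real.sqrt_sq hq.le]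
  rw [cos_arcsin, ← Real.sqrt_mul (sq_nonneg q)]
  congr 1
  field_simp

lemma mul_sin_arcsin_div {q : ℝ} (hc : 0 ≤ c) (hq : 0 < q) (hcq : c ≤ q) :
    q * sin (arcsin (c / q)) = c := by
  rw [sin_arcsin (by linarith [div_nonneg hc hq.le]) ((div_le_one hq).mpr hcq),
    mul_div_cancel₀ _ hq.ne']

lemma pos_of_lt_arcsin {x a b : ℝ} (hx : 0 < x) (hb : 0 < b) (hxa : x < arcsin (a / b)) :
    0 < sin x ∧ 0 < cos x ∧ b * sin x < a := by
  have hx' : x < π / 2 := hxa.trans_le (arcsin_le_pi_div_two _)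
  refine ⟨sin_pos_of_pos_of_lt_pi hx (by linarith), cos_pos_of_mem_Ioo ⟨by linarith, hx'⟩, ?_⟩
  rwa [lt_arcsin_iff_sin_lt' ⟨by linarith, hx'⟩, lt_div_iff₀ hb, mul_comm] at hxa

/-- The angle between the normal of an attached weak shock and the axis of `v` when a flow with
velocity components `u` along a wall and `v` towards it is turned parallel to the wall and `c` is
the normal speed ahead of the shock. It is the Mach angle minus the angle of attack. -/
noncomputable def shockAngle (c u v : ℝ) : ℝ :=
  arcsin (c / √(v ^ 2 + u ^ 2)) - arctan (v / u)

lemma shockAngle_mem_Ioo (hv : 0 < v) (hvc : v < c) (hu : 0 < u) (hcq : c ≤ √(v ^ 2 + u ^ 2)) :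
    shockAngle c u v ∈ Ioo 0 (π / 2) := by
  have hq : 0 < √(v ^ 2 + u ^ 2) := (hv.trans hvc).trans_le hcq
  have hlt : arctan (v / u) < arcsin (c / √(v ^ 2 + u ^ 2)) := by
    rwa [lt_arcsin_iff_sin_lt' ⟨(neg_pi_div_two_lt_arctan _).le, arctan_lt_pi_div_two _⟩,
      lt_div_iff₀' hq, sqrt_mul_sin_arctan_div hu]
  have hpos : 0 < arctan (v / u) := arctan_pos.mpr (div_pos hv hu)
  exact ⟨sub_pos.mpr hlt, (sub_lt_self _ hpos).trans_le (arcsin_le_pi_div_two _)⟩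

lemma mul_cos_sub_mul_sin_shockAngle (hc : 0 < c) (hu : 0 < u) (hcq : c ≤ √(v ^ 2 + u ^ 2)) :
    c * cos (shockAngle c u v) - √(√(v ^ 2 + u ^ 2) ^ 2 - c ^ 2) * sin (shockAngle c u v) =
      v := by
  have hq : 0 < √(v ^ 2 + u ^ 2) := hc.trans_le hcq
  have hattack := sqrt_mul_sin_arctan_div hu v
  rw [← sub_sub_cancel (arcsin (c / √(v ^ 2 + u ^ 2))) (arctan (v / u)), ← shockAngle,
    sin_sub] at hattack
  linear_combination hattack - cos (shockAngle c u v) * mul_sin_arcsin_div hc.le hq hcq +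
    sin (shockAngle c u v) * mul_cos_arcsin_div hq c

lemma mul_cos_add_mul_sin_shockAngle (hc : 0 < c) (hu : 0 < u) (hcq : c ≤ √(v ^ 2 + u ^ 2)) :
    √(√(v ^ 2 + u ^ 2) ^ 2 - c ^ 2) * cos (shockAngle c u v) + c * sin (shockAngle c u v) =
      u := by
  have hq : 0 < √(v ^ 2 + u ^ 2) := hc.trans_le hcq
  have hattack := sqrt_mul_cos_arctan_div hu v
  rw [← sub_sub_cancel (arcsin (c / √(v ^ 2 + u ^ 2))) (arctan (v / u)), ← shockAngle,
    cos_sub] at hattack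
  linear_combination hattack - sin (shockAngle c u v) * mul_sin_arcsin_div hc.le hq hcq -
    cos (shockAngle c u v) * mul_cos_arcsin_div hq c

/-- The speed `q_jσ` along the wall behind the shock, for a flow with components `u` along the
wall and `v` towards it; in the symbols of the paper `q̃∞ = √(v² + u²)` and
`α_n = arctan (v / u)`. -/
noncomputable def jetSpeed (c u v : ℝ) : ℝ :=
  √(v ^ 2 + u ^ 2) * √(√(v ^ 2 + u ^ 2) ^ 2 - c ^ 2) /
    (cos (arctan (v / u)) * (√(√(v ^ 2 + u ^ 2) ^ 2 - c ^ 2) + c * tan (arctan (v / u))))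

lemma jetSpeed_eq_div_cos_shockAngle (hc : 0 < c) (hcq : c ≤ √(v ^ 2 + u ^ 2)) :
    jetSpeed c u v = √(√(v ^ 2 + u ^ 2) ^ 2 - c ^ 2) / cos (shockAngle c u v) := by
  have hq : 0 < √(v ^ 2 + u ^ 2) := hc.trans_le hcq
  have hdenom : cos (arctan (v / u)) *
      (√(√(v ^ 2 + u ^ 2) ^ 2 - c ^ 2) + c * tan (arctan (v / u))) =
        √(v ^ 2 + u ^ 2) * cos (shockAngle c u v) := by
    rw [shockAngle, cos_sub, ← tan_mul_cos (cos_arctan_pos (v / u)).ne']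
    linear_combination -cos (arctan (v / u)) * mul_cos_arcsin_div hq c -
      tan (arctan (v / u)) * cos (arctan (v / u)) * mul_sin_arcsin_div hc.le hq hcq
  rw [jetSpeed, hdenom, mul_div_mul_left _ _ hq.ne']

lemma sub_div_cos_mul_sin_eq {σ β R v₃ : ℝ} (hβ : cos β ≠ 0)
    (hv₃ : R * cos β + c * sin β = v₃ * cos σ) :
    v₃ * sin σ * cos σ - R / cos β * sin σ = sin σ * tan β * (c * cos β - R * sin β) := by
  rw [tan_eq_sin_div_cos]
  field_simp
  linear_combination sin σ * (-cos β * hv₃ + R * sin_sq_add_cos_sq β)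

/-- The shock with angle `β` attached to the edge spanned by `(0, cos σ, sin σ)`: the upstream
velocity has components `c` along the normal, `R` along the shock and across the edge, and
`v₃ * sin σ` along the edge; the downstream velocity has components `R / cos β` and `v₃ * sin σ`
across and along the edge. -/
noncomputable def ConicalShock.ofShockAngle {σ β R v₃ : ℝ} (hσ₀ : 0 < sin σ) (hσ₁ : 0 < cos σ)
    (hβ : β ∈ Ioo 0 (π / 2)) (hR : 0 < R) (hv₁ : 0 < c * cos β - R * sin β)
    (hv₃ : R * cos β + c * sin β = v₃ * cos σ) (hv₃_pos : 0 < v₃) :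
    ConicalShock (c * cos β - R * sin β) v₃ (v₃ * sin σ * cos σ - R / cos β * sin σ)
      (v₃ * sin σ ^ 2 + R / cos β * cos σ) c :=
  have hcos : 0 < cos β := cos_pos_of_mem_Ioo ⟨by linarith [hβ.1, pi_pos], hβ.2⟩
  { tangent := !₂[-R * sin β, v₃ * sin σ * cos σ - R * cos β * sin σ,
      v₃ * sin σ ^ 2 + R * cos β * cos σ]
    normal := !₂[cos β, -sin β * sin σ, sin β * cos σ]
    downSpeed := R * tan β
    inner_tangent_normal := by
      simp only [PiLp.inner_apply, RCLike.inner_apply, ringHom_apply, Fin.sum_univ_three,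
        Matrix.cons_val]
      linear_combination R * sin β * cos β * sin_sq_add_cos_sq σ
    norm_normal := by
      rw [← sq_eq_sq₀ (norm_nonneg _) zero_le_one, EuclideanSpace.real_norm_sq_eq]
      simp only [Fin.sum_univ_three, Matrix.cons_val]
      linear_combination sin β ^ 2 * sin_sq_add_cos_sq σ + sin_sq_add_cos_sq β
    upstream := by
      ext i
      fin_cases i <;>
        simp only [Fin.zero_eta, Fin.mk_one, Fin.reduceFinMk, PiLp.add_apply, PiLp.smul_apply,
          smul_eq_mul, Matrix.cons_val]
      · ring
      · linear_combination -sin σ * hv₃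
      · linear_combination cos σ * hv₃ + v₃ * sin_sq_add_cos_sq σ
    downstream := by
      have hacross := mul_cos_add_mul_tan_mul_sin R hcos.ne'
      ext i
      fin_cases i <;>
        simp only [Fin.zero_eta, Fin.mk_one, Fin.reduceFinMk, PiLp.add_apply, PiLp.smul_apply,
          smul_eq_mul, Matrix.cons_val]
      · linear_combination R * tan_mul_cos hcos.ne'
      · linear_combination -sin σ * hacross
      · linear_combination cos σ * hacross
    downSpeed_pos := mul_pos hR (tan_pos_of_pos_of_lt_pi_div_two hβ.1 hβ.2)
    downSpeed_lt := by
      rw [tan_eq_sin_div_cos, ← mul_div_assoc, div_lt_iff₀ hcos]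
      linarith
    v₁_pos := hv₁
    w₂_pos := by
      rw [sub_div_cos_mul_sin_eq hcos.ne' hv₃]
      exact mul_pos (mul_pos hσ₀ (tan_pos_of_pos_of_lt_pi_div_two hβ.1 hβ.2)) hv₁
    w₃_pos := by positivity
    tangent_two_pos := by
      change 0 < v₃ * sin σ ^ 2 + R * cos β * cos σ
      positivity }

lemma nonempty_conicalShock {σ v₁ v₃ : ℝ} (hσ₀ : 0 < sin σ) (hσ₁ : 0 < cos σ) (hv₁ : 0 < v₁)
    (hv₁c : v₁ < c) (hv₃ : 0 < v₃) (hcq : c < √(v₁ ^ 2 + (v₃ * cos σ) ^ 2)) :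
    Nonempty (ConicalShock v₁ v₃
      (v₃ * sin σ * cos σ - jetSpeed c (v₃ * cos σ) v₁ * sin σ)
      (v₃ * sin σ ^ 2 + jetSpeed c (v₃ * cos σ) v₁ * cos σ) c) := by
  have hc := hv₁.trans hv₁c
  have hu := mul_pos hv₃ hσ₁
  have hR : 0 < √(√(v₁ ^ 2 + (v₃ * cos σ) ^ 2) ^ 2 - c ^ 2) :=
    Real.sqrt_pos.mpr (sub_pos.mpr (pow_lt_pow_left₀ hcq hc.le two_ne_zero))
  have hacross := mul_cos_sub_mul_sin_shockAngle hc hu hcq.le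
  have S := ConicalShock.ofShockAngle hσ₀ hσ₁ (shockAngle_mem_Ioo hv₁ hv₁c hu hcq.le) hR
    (by rwa [hacross]) (mul_cos_add_mul_sin_shockAngle hc hu hcq.le) hv₃
  rw [hacross, ← jetSpeed_eq_div_cos_shockAngle hc hcq.le] at S
  exact ⟨S⟩

end ShockPolar

/-- Lemma 2.2: for `σ ∈ (0, σ₀)`, the sonic circles `C∞` and `Cσ` intersect exactly in
one point `P₁`, which is their common tangency point, the intersection coincides with
`C∞ ∩ S_ob`, the oblique shock line `S_ob` is tangent to `C∞` at `P₁` (its normal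
`(v₁∞, −v₂σ)` is parallel to the gradient of the defining function of `C∞` there), and
the intersection of `Cσ` with the positive `ξ₂`-axis lies strictly below
`P₀ = (0, √(c∞²−v₁∞²)/√B∞)`. -/
theorem sonic_circles_tangent
    (ρinf qinf A cinf Binf α0 α v1 v3 σ0 σ qt αn qj v2σ v3σ : ℝ)
    (hρ : 0 < ρinf) (hA : 0 < A)
    (hc : cinf = Real.sqrt A / ρinf) (hq : cinf < qinf)
    (hB : Binf = qinf ^ 2 - cinf ^ 2)
    (hα0 : α0 = Real.arcsin (cinf / qinf))
    (hα : 0 < α) (hαlt : α < α0)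
    (hv1 : v1 = qinf * Real.sin α) (hv3 : v3 = qinf * Real.cos α)
    (hσ0 : σ0 = Real.arcsin (Real.sqrt Binf / v3))
    (hσ : 0 < σ) (hσlt : σ < σ0)
    (hqt : qt = Real.sqrt (v1 ^ 2 + v3 ^ 2 * Real.cos σ ^ 2))
    (hαn : αn = Real.arctan (Real.tan α / Real.cos σ))
    (hqj : qj = qt * Real.sqrt (qt ^ 2 - cinf ^ 2) /
        (Real.cos αn * (Real.sqrt (qt ^ 2 - cinf ^ 2) + cinf * Real.tan αn)))
    (hv2σ : v2σ = v3 * Real.sin σ * Real.cos σ - qj * Real.sin σ)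
    (hv3σ : v3σ = v3 * Real.sin σ ^ 2 + qj * Real.cos σ)
    (Cinf Cσ Sob : Set (ℝ × ℝ))
    (hCinf : Cinf = {ξ : ℝ × ℝ | (v1 * ξ.1 + v3) ^ 2 = Binf * (1 + ξ.1 ^ 2 + ξ.2 ^ 2)})
    (hCσ : Cσ = {ξ : ℝ × ℝ | (v2σ * ξ.2 + v3σ) ^ 2 = Binf * (1 + ξ.1 ^ 2 + ξ.2 ^ 2)})
    (hSob : Sob = {ξ : ℝ × ℝ | v1 * ξ.1 + v3 = v2σ * ξ.2 + v3σ}) :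
    (Cinf ∩ Cσ = Cinf ∩ Sob) ∧
    (∃! P : ℝ × ℝ, P ∈ Cinf ∩ Cσ) ∧
    (∀ P ∈ Cinf ∩ Cσ,
      -- the gradient of `(v₁∞ξ₁+v₃∞)² − B∞(1+|ξ|²)` at `P` is nonzero
      ((2 * v1 * (v1 * P.1 + v3) - 2 * Binf * P.1, -(2 * Binf * P.2)) ≠ ((0 : ℝ), (0 : ℝ))) ∧
      -- the gradient of `(v₂σξ₂+v₃σ)² − B∞(1+|ξ|²)` at `P` is nonzero
      ((-(2 * Binf * P.1), 2 * v2σ * (v2σ * P.2 + v3σ) - 2 * Binf * P.2) ≠ ((0 : ℝ), (0 : ℝ))) ∧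
      -- the normal `(v₁∞, −v₂σ)` of the line `S_ob` is parallel to the first gradient,
      -- i.e. `S_ob` is tangent to `C∞` at `P`
      (v1 * (-(2 * Binf * P.2)) = -v2σ * (2 * v1 * (v1 * P.1 + v3) - 2 * Binf * P.1)) ∧
      -- the two gradients are parallel, i.e. `C∞` and `Cσ` are tangent at `P`
      ((2 * v1 * (v1 * P.1 + v3) - 2 * Binf * P.1) *
          (2 * v2σ * (v2σ * P.2 + v3σ) - 2 * Binf * P.2)
        = (-(2 * Binf * P.2)) * (-(2 * Binf * P.1)))) ∧
    (∀ t : ℝ, 0 < t → ((0, t) : ℝ × ℝ) ∈ Cσ →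
      t < Real.sqrt (cinf ^ 2 - v1 ^ 2) / Real.sqrt Binf) := by
  have hc₀ : 0 < cinf := hc ▸ div_pos (Real.sqrt_pos.mpr hA) hρ
  have hq₀ : 0 < qinf := hc₀.trans hq
  obtain ⟨hsinα, hcosα, hv₁c⟩ := pos_of_lt_arcsin hα hq₀ (hα0 ▸ hαlt)
  rw [← hv1] at hv₁c
  have hv₁ : 0 < v1 := hv1 ▸ mul_pos hq₀ hsinα
  have hv₃ : 0 < v3 := hv3 ▸ mul_pos hq₀ hcosα
  obtain ⟨hsinσ, hcosσ, hσB⟩ := pos_of_lt_arcsin hσ hv₃ (hσ0 ▸ hσlt)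
  have hBnorm : Binf = v1 ^ 2 + v3 ^ 2 - cinf ^ 2 := by
    rw [hB, hv1, hv3]
    linear_combination -qinf ^ 2 * sin_sq_add_cos_sq α
  have hcq : cinf < √(v1 ^ 2 + (v3 * cos σ) ^ 2) := by
    rw [Real.lt_sqrt (mul_pos hv₃ hsinσ).le] at hσB
    apply Real.lt_sqrt_of_sq_lt
    linear_combination hσB + hBnorm - v3 ^ 2 * sin_sq_add_cos_sq σ
  have hjet : qj = jetSpeed cinf (v3 * cos σ) v1 := by
    have htan : tan α / cos σ = v1 / (v3 * cos σ) := by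
      rw [hv1, hv3, tan_eq_sin_div_cos]
      field_simp
    rw [hqj, hqt, hαn, htan, jetSpeed, mul_pow]
  obtain ⟨S⟩ := nonempty_conicalShock hsinσ hcosσ hv₁ hv₁c hv₃ hcq
  rw [← hjet, ← hv2σ, ← hv3σ] at S
  rw [hBnorm, ← S.norm_tangent_sq] at hCinf hCσ ⊢
  rw [hCinf, hCσ, hSob, S.circles_inter_eq, S.upstreamCircle_inter_shockLine_eq]
  exact ⟨rfl, S.existsUnique_conicalVector_mem_span,
    fun _ hP ↦ S.tangent_of_conicalVector_mem_span hP,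
    fun _ ht hmem ↦ S.lt_of_mem_downstreamCircle ht hmem⟩
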